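/- The center of the braid group B_n (for n ≥ 3) is infinite cyclic, generated by the full twist z_n = (σ_1⋯σ_{n-1})^n. -/

import Mathlib

/-- The Artin braid relations on generators `σ_0, …, σ_{m-1}` (0-indexed). -/
def braidRels (m : ℕ) : Set (FreeGroup (Fin m)) :=
  {r | ∃ i j : Fin m,
      ((i : ℕ) + 1 = (j : ℕ) ∧
        r = FreeGroup.of i * FreeGroup.of j * FreeGroup.of i *
          (FreeGroup.of j * FreeGroup.of i * FreeGroup.of j)⁻¹) ∨
      ((i : ℕ) + 1 < (j : ℕ) ∧
        r = FreeGroup.of i * FreeGroup.of j * (FreeGroup.of j * FreeGroup.of i)⁻¹)}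

/-- The braid group on `n` strands. -/
abbrev BraidGroup (n : ℕ) := PresentedGroup (braidRels (n - 1))

/-- The generator `σ_{i+1}` of `B_n` (0-indexed); equals `1` out of range. -/
def braidGen (n i : ℕ) : BraidGroup n :=
  if h : i < n - 1 then PresentedGroup.of ⟨i, h⟩ else 1

/-- `ρ = σ_1 ⋯ σ_{n-1}`. -/
def braidRho (n : ℕ) : BraidGroup n := ((List.range (n - 1)).map (braidGen n)).prod

/-- The full twist `z_n = (σ_1 ⋯ σ_{n-1})^n`. -/
def fullTwist (n : ℕ) : BraidGroup n := braidRho n ^ n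

/-!
Following Garside, the monoid of positive braids embeds in `B_n`, and every braid becomes positive
after multiplication by a power of the full twist. So a central braid is, up to powers of the twist,
a central positive braid. Such a braid is divisible by all generators as soon as it is divisible by
one, hence it is a power of their least common multiple `Δ`, and the center of `B_n` is cyclic.
A central braid returns the first two strands to their positions, and on such braids the linking
number of these two strands is a homomorphism to `ℤ`. It takes the value `1` on the full twist, so
the full twist generates the center and has infinite order.
-/

section Lcm

variable {M : Type*} [Monoid M]

/-- `l` is a least common right multiple of `s`: the right ideal `l M` is the intersection of the
right ideals `a M`, `a ∈ s`. -/
def IsLcm (s : Set M) (l : M) : Prop := ∀ y, l ∣ y ↔ ∀ a ∈ s, a ∣ y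

theorem isLcm_pair {a b l : M} : IsLcm {a, b} l ↔ ∀ y, l ∣ y ↔ a ∣ y ∧ b ∣ y := by
  simp [IsLcm]

theorem isLcm_range {ι : Type*} {f : ι → M} {l : M} :
    IsLcm (Set.range f) l ↔ ∀ y, l ∣ y ↔ ∀ i, f i ∣ y := by
  simp [IsLcm]

theorem isLcm_one_left (b : M) : IsLcm {1, b} b := by
  simp [isLcm_pair]

theorem IsLcm.symm {a b l : M} (h : IsLcm {a, b} l) : IsLcm {b, a} l := by
  rwa [Set.pair_comm]

theorem IsLcm.dvd {s : Set M} {l a : M} (h : IsLcm s l) (ha : a ∈ s) : a ∣ l :=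
  (h l).1 dvd_rfl a ha

theorem IsLcm.insert {s : Set M} {a l l' : M} (hs : IsLcm s l) (h : IsLcm {a, l} l') :
    IsLcm (insert a s) l' := fun y => by
  rw [isLcm_pair.1 h, hs y, Set.forall_mem_insert]

variable [IsLeftCancelMul M]

theorem mul_dvd_mul_left_cancel_iff {a b c : M} : a * b ∣ a * c ↔ b ∣ c := by
  simp only [dvd_def, mul_assoc, mul_right_inj]

theorem IsLcm.mul_right {a b c d l : M} (hac : IsLcm {a, c} (c * b)) (hbd : IsLcm {b, d} l) :
    IsLcm {a, c * d} (c * l) := by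
  refine isLcm_pair.2 fun y => ⟨fun hy => ?_, fun ⟨ha, hcd⟩ => ?_⟩
  · have hb : c * b ∣ c * l := mul_dvd_mul_left_cancel_iff.2 (hbd.dvd (by simp))
    have hd : c * d ∣ c * l := mul_dvd_mul_left_cancel_iff.2 (hbd.dvd (by simp))
    exact ⟨((hac.dvd (by simp)).trans hb).trans hy, hd.trans hy⟩
  · obtain ⟨y, rfl⟩ := (dvd_mul_right c d).trans hcd
    have hb : c * b ∣ c * y := (isLcm_pair.1 hac _).2 ⟨ha, dvd_mul_right c y⟩
    rw [mul_dvd_mul_left_cancel_iff] at hb hcd ⊢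
    exact (isLcm_pair.1 hbd y).2 ⟨hb, hcd⟩

end Lcm

section Localization

universe u

variable {M : Type u} [Monoid M]

/-- Central elements satisfy the Ore condition trivially, with `s⁻¹ r = r s⁻¹`. -/
abbrev oreSetOfLeCenter (S : Submonoid M) (hS : S ≤ Submonoid.center M) :
    OreLocalization.OreSet S where
  ore_right_cancel r₁ r₂ s h := by
    refine ⟨s, ?_⟩
    rw [← Submonoid.mem_center_iff.1 (hS s.2) r₁, h, Submonoid.mem_center_iff.1 (hS s.2) r₂]
  oreNum r _ := r
  oreDenom _ s := s
  ore_eq r s := (Submonoid.mem_center_iff.1 (hS s.2) r).symm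

theorem isUnit_map_of_dvd_of_mem_center [IsLeftCancelMul M] {L : Type*} [Monoid L] (f : M →* L)
    {x z : M} (hxz : x ∣ z) (hz : z ∈ Submonoid.center M) (hfz : IsUnit (f z)) :
    IsUnit (f x) := by
  obtain ⟨y, rfl⟩ := hxz
  have hyx : y * x = x * y := mul_left_cancel (a := x) <| by
    rw [← mul_assoc, Submonoid.mem_center_iff.1 hz x]
  exact (Commute.isUnit_mul_iff (show Commute (f x) (f y) by
    rw [commute_iff_eq, ← map_mul, ← map_mul, hyx])).1 (by rwa [← map_mul]) |>.1

theorem mul_right_cancel_of_dvd_of_mem_center [IsLeftCancelMul M] {a x y z : M} (haz : a ∣ z)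
    (hz : z ∈ Submonoid.center M) (h : x * a = y * a) : x = y := by
  obtain ⟨b, rfl⟩ := haz
  refine mul_left_cancel (a := a * b) ?_
  rw [← Submonoid.mem_center_iff.1 hz, ← Submonoid.mem_center_iff.1 hz, ← mul_assoc, ← mul_assoc, h]

theorem exists_injective_forall_dvd_isUnit [IsLeftCancelMul M] {z : M}
    (hz : z ∈ Submonoid.center M) :
    ∃ (L : Type u) (_ : Monoid L) (f : M →* L), Function.Injective f ∧
      ∀ x, x ∣ z → IsUnit (f x) := by
  let S := Submonoid.powers z
  let _ : OreLocalization.OreSet S := oreSetOfLeCenter S (Submonoid.powers_le.2 hz)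
  let f : M →* OreLocalization S M := OreLocalization.numeratorHom
  refine ⟨OreLocalization S M, inferInstance, f, fun x y hxy => ?_, fun x hx =>
    isUnit_map_of_dvd_of_mem_center f hx hz
      (OreLocalization.numerator_isUnit (⟨z, Submonoid.mem_powers z⟩ : S))⟩
  obtain ⟨u, v, huv, huv'⟩ := OreLocalization.oreDiv_eq_iff.1 hxy
  have hvu : v = u := by simpa using huv'.symm
  rw [Submonoid.smul_def, smul_eq_mul, smul_eq_mul, hvu] at huv
  exact (mul_left_cancel huv).symm

end Localization

section Fractions

variable {M H : Type*} [Monoid M] [Group H] {f : M →* H} {s : Set M} {z : M}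

theorem map_mem_center_of_closure_eq_top (hs : Subgroup.closure (f '' s) = ⊤)
    (hz : z ∈ Submonoid.center M) : f z ∈ Subgroup.center H := by
  have hle : Subgroup.closure (f '' s) ≤ Subgroup.centralizer {f z} := by
    rw [Subgroup.closure_le]
    rintro _ ⟨a, -, rfl⟩
    refine Subgroup.mem_centralizer_singleton_iff.2 ?_
    rw [← map_mul, ← map_mul, Submonoid.mem_center_iff.1 hz a]
  exact Subgroup.mem_center_iff.2 fun x =>
    Subgroup.mem_centralizer_singleton_iff.1 (hle (hs ▸ Subgroup.mem_top x))

theorem exists_mul_pow_eq_map (hs : Subgroup.closure (f '' s) = ⊤)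
    (hz : z ∈ Submonoid.center M) (hdvd : ∀ a ∈ s, a ∣ z) (x : H) :
    ∃ (k : ℕ) (a : M), x * f z ^ k = f a := by
  have hfz := Subgroup.mem_center_iff.1 (map_mem_center_of_closure_eq_top hs hz)
  have hx : x ∈ Subgroup.closure (f '' s) := hs ▸ Subgroup.mem_top x
  induction hx using Subgroup.closure_induction_left with
  | one => exact ⟨0, 1, by simp⟩
  | mul_left x hx y _ ih =>
    obtain ⟨c, -, rfl⟩ := hx
    obtain ⟨k, a, ha⟩ := ih
    exact ⟨k, c * a, by rw [mul_assoc, ha, map_mul]⟩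
  | inv_mul_cancel x hx y _ ih =>
    obtain ⟨c, hc, rfl⟩ := hx
    obtain ⟨k, a, ha⟩ := ih
    obtain ⟨w, hw⟩ := hdvd c hc
    refine ⟨k + 1, w * a, ?_⟩
    calc (f c)⁻¹ * y * f z ^ (k + 1)
        = (f c)⁻¹ * (f a * f z) := by rw [pow_succ, ← ha]; group
      _ = (f c)⁻¹ * (f z * f a) := by rw [hfz]
      _ = f (w * a) := by rw [hw, map_mul, map_mul]; group

theorem center_le_zpowers_map (hf : Function.Injective f) (hs : Subgroup.closure (f '' s) = ⊤)
    (hz : z ∈ Submonoid.center M) (hdvd : ∀ a ∈ s, a ∣ z) {d : M}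
    (hd : Submonoid.center M ≤ Submonoid.powers d) :
    Subgroup.center H ≤ Subgroup.zpowers (f d) := by
  have map_center_mem : ∀ a ∈ Submonoid.center M, f a ∈ Subgroup.zpowers (f d) := by
    intro a ha
    obtain ⟨k, rfl⟩ := hd ha
    exact map_pow f d k ▸ Subgroup.npow_mem_zpowers (f d) k
  intro c hc
  obtain ⟨k, a, ha⟩ := exists_mul_pow_eq_map hs hz hdvd c
  have hfa : f a ∈ Subgroup.center H :=
    ha ▸ mul_mem hc (pow_mem (map_mem_center_of_closure_eq_top hs hz) k)
  have ha_center : a ∈ Submonoid.center M := Submonoid.mem_center_iff.2 fun b => hf <| by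
    rw [map_mul, map_mul, Subgroup.mem_center_iff.1 hfa]
  rw [eq_mul_inv_of_mul_eq ha, ← map_pow]
  exact mul_mem (map_center_mem a ha_center) (inv_mem (map_center_mem _ (pow_mem hz k)))

end Fractions

section Cyclic

theorem zpowers_eq_top_of_map_eq_ofAdd_one {C : Type*} [Group C] [IsCyclic C]
    (χ : C →* Multiplicative ℤ) {z : C} (hz : χ z = .ofAdd 1) : Subgroup.zpowers z = ⊤ := by
  obtain ⟨c, hc⟩ := IsCyclic.exists_generator (α := C)
  obtain ⟨e, rfl⟩ := hc z
  have he : e * (χ c).toAdd = 1 := by simpa using congrArg Multiplicative.toAdd hz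
  rw [← (Subgroup.eq_top_iff' _).2 hc]
  rcases Int.isUnit_iff.1 (IsUnit.of_mul_eq_one _ he) with rfl | rfl <;> simp

theorem eq_zpowers_of_map_eq_ofAdd_one {H : Type*} [Group H] {C : Subgroup H} [IsCyclic C]
    (χ : C →* Multiplicative ℤ) {z : C} (hz : χ z = .ofAdd 1) : C = Subgroup.zpowers (z : H) := by
  calc C = (⊤ : Subgroup C).map C.subtype := by rw [← MonoidHom.range_eq_map, C.range_subtype]
    _ = Subgroup.zpowers (z : H) := by
      rw [← zpowers_eq_top_of_map_eq_ofAdd_one χ hz, MonoidHom.map_zpowers, C.coe_subtype]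

theorem eq_zero_of_zpow_eq_one_of_map_eq_ofAdd_one {C : Type*} [Group C]
    (χ : C →* Multiplicative ℤ) {z : C} (hz : χ z = .ofAdd 1) {k : ℤ} (hk : z ^ k = 1) :
    k = 0 := by
  have h : χ (z ^ k) = 1 := by rw [hk, map_one]
  rw [map_zpow, hz] at h
  simpa using congrArg Multiplicative.toAdd h

end Cyclic

section ArtinMonoid

variable {S : Type*}

/-- The defining relations of the simply laced Artin monoid of a Coxeter graph `G`: a braid
relation for every edge of `G` and a commutation relation for every edge of its complement. -/
inductive ArtinRel (G : SimpleGraph S) : FreeMonoid S → FreeMonoid S → Prop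
  | braid {i j : S} : G.Adj i j → ArtinRel G
      (FreeMonoid.of i * FreeMonoid.of j * FreeMonoid.of i)
      (FreeMonoid.of j * FreeMonoid.of i * FreeMonoid.of j)
  | comm {i j : S} : Gᶜ.Adj i j → ArtinRel G
      (FreeMonoid.of i * FreeMonoid.of j) (FreeMonoid.of j * FreeMonoid.of i)

/-- The simply laced Artin monoid of a Coxeter graph `G`. For a path it is the monoid of positive
braids. -/
abbrev ArtinMonoid (G : SimpleGraph S) := PresentedMonoid (ArtinRel G)

namespace ArtinMonoid

variable {G : SimpleGraph S} {i j k : S}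

/-- The generator `σ_i`, as an element of the Artin monoid. -/
def gen (i : S) : ArtinMonoid G := PresentedMonoid.of _ i

/-- The class of a positive word. -/
abbrev mk : FreeMonoid S →* ArtinMonoid G := PresentedMonoid.mk _

theorem adj_or_compl_adj_of_ne (h : i ≠ j) : G.Adj i j ∨ Gᶜ.Adj i j := by
  by_cases hij : G.Adj i j
  · exact .inl hij
  · exact .inr ⟨h, hij⟩

theorem gen_mul_comm (h : Gᶜ.Adj i j) (x : ArtinMonoid G) :
    gen i * (gen j * x) = gen j * (gen i * x) := by
  rw [← mul_assoc, ← mul_assoc]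
  exact congrArg (· * x) (PresentedMonoid.mk_eq_mk_of_rel (.comm h))

theorem gen_mul_braid (h : G.Adj i j) (x : ArtinMonoid G) :
    gen i * (gen j * (gen i * x)) = gen j * (gen i * (gen j * x)) := by
  simp only [← mul_assoc]
  exact congrArg (· * x) (PresentedMonoid.mk_eq_mk_of_rel (.braid h))

theorem mem_center_of_forall_gen {z : ArtinMonoid G} (h : ∀ i, Commute (gen i) z) :
    z ∈ Submonoid.center (ArtinMonoid G) := by
  have hle : Submonoid.closure (Set.range gen) ≤ Submonoid.centralizer {z} := by
    rw [Submonoid.closure_le]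
    rintro _ ⟨i, rfl⟩
    exact Submonoid.mem_centralizer_iff.2 (by rintro _ rfl; exact (h i).symm)
  rw [show Submonoid.closure (Set.range gen) = ⊤ from PresentedMonoid.closure_range_of _] at hle
  exact Submonoid.mem_center_iff.2 fun x =>
    (Submonoid.mem_centralizer_iff.1 (hle (Submonoid.mem_top x)) z rfl).symm

theorem eq_one_or_eq_gen_mul (x : ArtinMonoid G) : x = 1 ∨ ∃ i y, x = gen i * y := by
  obtain ⟨w, rfl⟩ := PresentedMonoid.surjective_mk x
  cases w using FreeMonoid.casesOn with
  | one => exact .inl rfl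
  | of_mul i w => exact .inr ⟨i, mk w, rfl⟩

/-- The word length, which is well defined because the Artin relations are homogeneous. -/
def length (x : ArtinMonoid G) : ℕ :=
  Multiplicative.toAdd <| PresentedMonoid.lift (fun _ => Multiplicative.ofAdd 1)
    (by rintro _ _ (_ | _) <;> rfl) x

@[simp]
theorem length_one : length (1 : ArtinMonoid G) = 0 := rfl

@[simp]
theorem length_gen (i : S) : length (gen i : ArtinMonoid G) = 1 := rfl

@[simp]
theorem length_mul (x y : ArtinMonoid G) : length (x * y) = length x + length y := by
  simp only [length, map_mul, toAdd_mul]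

@[simp]
theorem length_mk (w : FreeMonoid S) : length (mk w : ArtinMonoid G) = w.length := by
  induction w using FreeMonoid.inductionOn' with
  | one => rfl
  | of_mul i w ih => rw [map_mul, length_mul, ih, FreeMonoid.length_mul]; rfl

theorem length_eq_of_rel {a b : FreeMonoid S} (hab : ConGen.Rel (ArtinRel G) a b) :
    a.length = b.length := by
  simpa using congrArg length (PresentedMonoid.mk_eq_mk_iff.2 hab)

theorem exists_eq_of_mul_of_rel {a b u : FreeMonoid S}
    (hab : ConGen.Rel (ArtinRel G) a b) (ha : a = .of i * u) : ∃ j v, b = .of j * v := by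
  cases b using FreeMonoid.casesOn with
  | one =>
    have h := length_eq_of_rel hab
    simp [ha] at h
  | of_mul j v => exact ⟨j, v, rfl⟩

theorem exists_eq_gen_of_length_eq_one {x : ArtinMonoid G} (h : length x = 1) :
    ∃ i, x = gen i := by
  obtain rfl | ⟨i, y, rfl⟩ := eq_one_or_eq_gen_mul x
  · simp at h
  obtain rfl | ⟨j, y, rfl⟩ := eq_one_or_eq_gen_mul y
  · exact ⟨i, mul_one _⟩
  · simp at h

/-- The conclusion of Garside's lemma for an equation `σ_i x = σ_j y`: both sides are a common
multiple of `σ_i` and `σ_j` for the evident reason. -/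
inductive Confluent : S → S → ArtinMonoid G → ArtinMonoid G → Prop
  | refl (i : S) (x : ArtinMonoid G) : Confluent i i x x
  | comm {i j : S} (h : Gᶜ.Adj i j) (z : ArtinMonoid G) : Confluent i j (gen j * z) (gen i * z)
  | braid {i j : S} (h : G.Adj i j) (z : ArtinMonoid G) :
      Confluent i j (gen j * (gen i * z)) (gen i * (gen j * z))

namespace Confluent

variable {x y : ArtinMonoid G}

theorem symm (h : Confluent i j x y) : Confluent j i y x := by
  cases h with
  | refl => exact .refl _ _
  | comm h z => exact .comm h.symm z
  | braid h z => exact .braid h.symm z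

theorem mul_right (h : Confluent i j x y) (z : ArtinMonoid G) :
    Confluent i j (x * z) (y * z) := by
  cases h with
  | refl => exact .refl _ _
  | comm h w => simpa only [mul_assoc] using comm h (w * z)
  | braid h w => simpa only [mul_assoc] using braid h (w * z)

theorem eq (h : Confluent i i x y) : x = y := by
  cases h with
  | refl => rfl
  | comm h => exact (h.ne rfl).elim
  | braid h => exact (h.ne rfl).elim

theorem of_compl_adj (h : Confluent i j x y) (hij : Gᶜ.Adj i j) :
    ∃ z, x = gen j * z ∧ y = gen i * z := by
  cases h with
  | refl => exact (hij.ne rfl).elim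
  | comm _ z => exact ⟨z, rfl, rfl⟩
  | braid h => exact (hij.2 h).elim

theorem of_adj (h : Confluent i j x y) (hij : G.Adj i j) :
    ∃ z, x = gen j * (gen i * z) ∧ y = gen i * (gen j * z) := by
  cases h with
  | refl => exact (hij.ne rfl).elim
  | comm h => exact (h.2 hij).elim
  | braid _ z => exact ⟨z, rfl, rfl⟩

end Confluent

/-- Garside's lemma for equations `σ_i x = σ_j y` with `x` shorter than `s`. -/
def GarsideBelow (G : SimpleGraph S) (s : ℕ) : Prop :=
  ∀ ⦃i j : S⦄ ⦃x y : ArtinMonoid G⦄, length x < s → gen i * x = gen j * y → Confluent i j x y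

section Transitivity

variable {s : ℕ} {x y z w : ArtinMonoid G}

theorem GarsideBelow.trans_comm_comm (hs : GarsideBelow G s) (hik : Gᶜ.Adj i k) (hkj : Gᶜ.Adj k j)
    (hz : length z < s) (h : gen i * z = gen j * w) :
    Confluent i j (gen k * z) (gen k * w) := by
  cases hs hz h with
  | refl => exact .refl _ _
  | comm hij t =>
    rw [gen_mul_comm hkj, gen_mul_comm hik.symm]
    exact .comm hij _
  | braid hij t =>
    rw [gen_mul_comm hkj, gen_mul_comm hik.symm, gen_mul_comm hik.symm (gen j * t),
      gen_mul_comm hkj]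
    exact .braid hij _

theorem GarsideBelow.trans_comm_braid (hs : GarsideBelow G s) (hik : Gᶜ.Adj i k) (hkj : G.Adj k j)
    (hz : length z < s) (h : gen i * z = gen j * (gen k * w)) :
    Confluent i j (gen k * z) (gen k * (gen j * w)) := by
  have hlen := congrArg length h
  simp only [length_mul, length_gen] at hlen
  have hij : i ≠ j := by rintro rfl; exact hik.2 hkj.symm
  rcases adj_or_compl_adj_of_ne hij with hij | hij
  · obtain ⟨t, rfl, hw⟩ := (hs hz h).of_adj hij
    simp only [length_mul, length_gen] at hlen hz
    obtain ⟨p, rfl, hp⟩ := (hs (by lia) hw).of_compl_adj hik.symm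
    simp only [length_mul, length_gen] at hlen
    obtain ⟨r, rfl, rfl⟩ := (hs (by lia) hp).of_adj hkj.symm
    convert Confluent.braid hij (gen k * (gen j * (gen i * r))) using 1
    · rw [gen_mul_comm hik, gen_mul_braid hkj, gen_mul_braid hij.symm, gen_mul_comm hik.symm]
    · rw [gen_mul_braid hij.symm, gen_mul_comm hik.symm, gen_mul_comm hik r, gen_mul_braid hkj]
  · obtain ⟨t, rfl, hw⟩ := (hs hz h).of_compl_adj hij
    simp only [length_mul, length_gen] at hlen hz
    obtain ⟨r, rfl, rfl⟩ := (hs (by lia) hw).of_compl_adj hik.symm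
    convert Confluent.comm hij (gen k * (gen j * r)) using 1
    · rw [gen_mul_braid hkj]
    · rw [gen_mul_comm hij.symm, gen_mul_comm hik.symm]

theorem GarsideBelow.trans_braid_braid (hs : GarsideBelow G s) (hG : G.CliqueFree 3)
    (hik : G.Adj i k) (hkj : G.Adj k j) (hz : length (gen k * z) < s)
    (h : gen i * (gen k * z) = gen j * (gen k * w)) :
    Confluent i j (gen k * (gen i * z)) (gen k * (gen j * w)) := by
  have hlen := congrArg length h
  have hconf := hs hz h
  simp only [length_mul, length_gen] at hlen hz
  rcases eq_or_ne i j with rfl | hij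
  · rw [(hs (by lia) hconf.eq).eq]
    exact .refl _ _
  rcases adj_or_compl_adj_of_ne hij with hij | hij
  · classical exact (hG {i, k, j} (SimpleGraph.is3Clique_triple_iff.2 ⟨hik, hij, hkj⟩)).elim
  obtain ⟨t, hzt, hwt⟩ := hconf.of_compl_adj hij
  obtain ⟨p, rfl, rfl⟩ := (hs (by lia) hzt).of_adj hkj
  obtain ⟨q, rfl, hpq⟩ := (hs (by lia) hwt).of_adj hik.symm
  simp only [length_mul, length_gen] at hlen hz
  have hjp : gen j * p = gen i * q := (hs (by simp only [length_mul, length_gen]; lia) hpq).eq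
  obtain ⟨r, rfl, rfl⟩ := (hs (by lia) hjp).of_compl_adj hij.symm
  convert Confluent.comm hij (gen k * (gen i * (gen j * (gen k * r)))) using 1
  · rw [gen_mul_comm hij, gen_mul_braid hik, gen_mul_braid hkj, gen_mul_comm hij.symm]
  · rw [gen_mul_comm hij.symm, gen_mul_braid hkj.symm, gen_mul_braid hik.symm]

theorem GarsideBelow.trans (hs : GarsideBelow G s) (hG : G.CliqueFree 3) (hw : length w ≤ s)
    (hxw : Confluent i k x w) (hwy : Confluent k j w y) : Confluent i j x y := by
  cases hxw with
  | refl => exact hwy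
  | comm hik z =>
    rw [length_mul, length_gen] at hw
    rcases eq_or_ne k j with rfl | hkj
    · exact hwy.eq ▸ .comm hik z
    rcases adj_or_compl_adj_of_ne hkj with hkj | hkj
    · obtain ⟨t, ht, rfl⟩ := hwy.of_adj hkj
      exact hs.trans_comm_braid hik hkj (by lia) ht
    · obtain ⟨t, ht, rfl⟩ := hwy.of_compl_adj hkj
      exact hs.trans_comm_comm hik hkj (by lia) ht
  | braid hik z =>
    rcases eq_or_ne k j with rfl | hkj
    · exact hwy.eq ▸ .braid hik z
    rcases adj_or_compl_adj_of_ne hkj with hkj | hkj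
    · obtain ⟨t, ht, rfl⟩ := hwy.of_adj hkj
      rw [length_mul, length_gen] at hw
      exact hs.trans_braid_braid hG hik hkj (by lia) ht
    · obtain ⟨t, ht, rfl⟩ := hwy.of_compl_adj hkj
      rw [ht, length_mul, length_gen] at hw
      exact (hs.trans_comm_braid hkj.symm hik.symm (by lia) ht.symm).symm

theorem GarsideBelow.confluent_of_rel (hs : GarsideBelow G s) (hG : G.CliqueFree 3)
    {a b : FreeMonoid S} (hab : ConGen.Rel (ArtinRel G) a b) (ha : a.length ≤ s + 1)
    {u v : FreeMonoid S} (hau : a = .of i * u) (hbv : b = .of j * v) :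
    Confluent (G := G) i j (mk u) (mk v) := by
  induction hab generalizing i j u v with
  | of a b hab =>
    cases hab with
    | braid h =>
      obtain ⟨rfl, rfl⟩ := List.cons.inj hau
      obtain ⟨rfl, rfl⟩ := List.cons.inj hbv
      exact .braid h 1
    | comm h =>
      obtain ⟨rfl, rfl⟩ := List.cons.inj hau
      obtain ⟨rfl, rfl⟩ := List.cons.inj hbv
      exact .comm h 1
  | refl a =>
    obtain ⟨rfl, rfl⟩ := List.cons.inj (hau.symm.trans hbv)
    exact .refl _ _
  | symm hab ih => exact (ih (length_eq_of_rel hab ▸ ha) hbv hau).symm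
  | trans hac hcb ih₁ ih₂ =>
    obtain ⟨k, w, rfl⟩ := exists_eq_of_mul_of_rel hac hau
    have hw : (FreeMonoid.of k * w).length ≤ s + 1 := length_eq_of_rel hac ▸ ha
    refine hs.trans hG ?_ (ih₁ ha hau rfl) (ih₂ hw rfl hbv)
    rw [FreeMonoid.length_mul, FreeMonoid.length_of] at hw
    rw [length_mk]
    lia
  | @mul a b c d hab hcd ih₁ ih₂ =>
    rw [FreeMonoid.length_mul] at ha
    cases a using FreeMonoid.casesOn with
    | one =>
      obtain rfl := FreeMonoid.length_eq_zero.1 (length_eq_of_rel hab).symm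
      exact ih₂ (by lia) hau hbv
    | of_mul i a =>
      obtain ⟨j, b, rfl⟩ := exists_eq_of_mul_of_rel hab rfl
      obtain ⟨rfl, rfl⟩ := List.cons.inj hau
      obtain ⟨rfl, rfl⟩ := List.cons.inj hbv
      have hcd' : (mk c : ArtinMonoid G) = mk d := PresentedMonoid.mk_eq_mk_iff.2 hcd
      have h := (ih₁ (by lia) rfl rfl).mul_right (mk c)
      nth_rewrite 2 [hcd'] at h
      exact h

end Transitivity

variable {x y : ArtinMonoid G}

theorem garsideBelow (hG : G.CliqueFree 3) (s : ℕ) : GarsideBelow G s := by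
  induction s with
  | zero => exact fun _ _ _ _ hx => absurd hx (Nat.not_lt_zero _)
  | succ s hs =>
    intro i j x y hx h
    obtain ⟨u, rfl⟩ := PresentedMonoid.surjective_mk x
    obtain ⟨v, rfl⟩ := PresentedMonoid.surjective_mk y
    rw [length_mk] at hx
    exact hs.confluent_of_rel hG (PresentedMonoid.mk_eq_mk_iff.1 h)
      (by rw [FreeMonoid.length_mul, FreeMonoid.length_of]; lia) rfl rfl

theorem confluent_of_gen_mul_eq [hG : Fact (G.CliqueFree 3)] (h : gen i * x = gen j * y) :
    Confluent i j x y :=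
  garsideBelow hG.out _ (Nat.lt_succ_self _) h

/-- Left multiplication of `y` by a generator amounts to right multiplication by a generator. -/
def IsQuasiCentral (y : ArtinMonoid G) : Prop := ∀ i, ∃ j, gen i * y = y * gen j

theorem isQuasiCentral_of_mem_center (hy : y ∈ Submonoid.center (ArtinMonoid G)) :
    IsQuasiCentral y :=
  fun i => ⟨i, Submonoid.mem_center_iff.1 hy _⟩

variable [Fact (G.CliqueFree 3)]

instance : IsLeftCancelMul (ArtinMonoid G) where
  mul_left_cancel a x y h := by
    obtain ⟨w, rfl⟩ := PresentedMonoid.surjective_mk a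
    induction w using FreeMonoid.inductionOn' with
    | one => simpa using h
    | of_mul i w ih =>
      simp only [map_mul, mul_assoc] at h
      exact ih (confluent_of_gen_mul_eq h).eq

theorem gen_injective : Function.Injective (gen : S → ArtinMonoid G) := by
  intro i j h
  by_contra hij
  have hconf : Confluent (G := G) i j 1 1 := confluent_of_gen_mul_eq (by rw [h])
  rcases adj_or_compl_adj_of_ne (G := G) hij with hij | hij
  · obtain ⟨z, hz, -⟩ := hconf.of_adj hij
    have hlen := congrArg length hz
    simp only [length_one, length_mul, length_gen] at hlen
    lia
  · obtain ⟨z, hz, -⟩ := hconf.of_compl_adj hij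
    have hlen := congrArg length hz
    simp only [length_one, length_mul, length_gen] at hlen
    lia

theorem isLcm_gen_gen_of_compl_adj (h : Gᶜ.Adj i j) :
    IsLcm {gen i, gen j} (gen j * gen i : ArtinMonoid G) := by
  refine isLcm_pair.2 fun y => ⟨?_, ?_⟩
  · rintro ⟨z, rfl⟩
    exact ⟨⟨gen j * z, by rw [mul_assoc, gen_mul_comm h]⟩, ⟨gen i * z, mul_assoc _ _ _⟩⟩
  · rintro ⟨⟨x, rfl⟩, y, hxy⟩
    obtain ⟨z, rfl, rfl⟩ := (confluent_of_gen_mul_eq hxy).of_compl_adj h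
    exact ⟨z, by rw [hxy, mul_assoc]⟩

theorem isLcm_gen_gen_of_adj (h : G.Adj i j) :
    IsLcm {gen i, gen j} (gen j * (gen i * gen j) : ArtinMonoid G) := by
  refine isLcm_pair.2 fun y => ⟨?_, ?_⟩
  · rintro ⟨z, rfl⟩
    exact ⟨⟨gen j * (gen i * z), by simp only [mul_assoc, gen_mul_braid h]⟩,
      ⟨gen i * (gen j * z), by simp only [mul_assoc]⟩⟩
  · rintro ⟨⟨x, rfl⟩, y, hxy⟩
    obtain ⟨z, rfl, rfl⟩ := (confluent_of_gen_mul_eq hxy).of_adj h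
    exact ⟨z, by simp only [hxy, mul_assoc]⟩

theorem exists_isLcm_gen_gen (i j : S) :
    ∃ v : ArtinMonoid G, IsLcm {gen i, gen j} (gen j * v) := by
  rcases eq_or_ne i j with rfl | hij
  · exact ⟨1, isLcm_pair.2 fun y => by rw [mul_one, and_self]⟩
  rcases adj_or_compl_adj_of_ne (G := G) hij with hij | hij
  · exact ⟨_, isLcm_gen_gen_of_adj hij⟩
  · exact ⟨_, isLcm_gen_gen_of_compl_adj hij⟩

theorem exists_isLcm_pair {a b x : ArtinMonoid G} (ha : a ∣ x) (hb : b ∣ x) :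
    ∃ l, IsLcm {a, b} l := by
  induction hs : length x using Nat.strong_induction_on generalizing a b x with
  | _ s ih =>
  obtain rfl | ⟨i, a, rfl⟩ := eq_one_or_eq_gen_mul a
  · exact ⟨b, isLcm_one_left b⟩
  obtain rfl | ⟨j, b, rfl⟩ := eq_one_or_eq_gen_mul b
  · exact ⟨_, (isLcm_one_left _).symm⟩
  obtain ⟨v, hv⟩ := exists_isLcm_gen_gen (G := G) i j
  have hi : gen i ∣ x := (dvd_mul_right _ a).trans ha
  have hj : gen j ∣ x := (dvd_mul_right _ b).trans hb
  have hvx : gen j * v ∣ x := (isLcm_pair.1 hv x).2 ⟨hi, hj⟩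
  -- `lcm (v, b)` yields the lcm of `gen i` and `gen j * b`, and `lcm (r, a)` then yields the goal.
  obtain ⟨l, hl⟩ : ∃ l, IsLcm {v, b} l := by
    obtain ⟨x, rfl⟩ := hj
    rw [mul_dvd_mul_left_cancel_iff] at hvx hb
    exact ih (length x) (by rw [← hs, length_mul, length_gen]; lia) hvx hb rfl
  have hjl := hv.mul_right hl
  have hjlx : gen j * l ∣ x := (isLcm_pair.1 hjl x).2 ⟨hi, hb⟩
  obtain ⟨r, hr⟩ : gen i ∣ gen j * l := hjl.dvd (by simp)
  rw [hr] at hjl hjlx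
  obtain ⟨l', hl'⟩ : ∃ l, IsLcm {r, a} l := by
    obtain ⟨x, rfl⟩ := hi
    rw [mul_dvd_mul_left_cancel_iff] at hjlx ha
    exact ih (length x) (by rw [← hs, length_mul, length_gen]; lia) hjlx ha rfl
  exact ⟨_, (hjl.symm.mul_right hl').symm⟩

theorem exists_isLcm_of_finite {s : Set (ArtinMonoid G)} (hs : s.Finite) {x : ArtinMonoid G}
    (hx : ∀ a ∈ s, a ∣ x) : ∃ l, IsLcm s l := by
  induction s, hs using Set.Finite.induction_on with
  | empty => exact ⟨1, by simp [IsLcm]⟩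
  | insert _ _ ih =>
    rw [Set.forall_mem_insert] at hx
    obtain ⟨l, hl⟩ := ih hx.2
    obtain ⟨l', hl'⟩ := exists_isLcm_pair hx.1 ((hl x).2 hx.2)
    exact ⟨l', hl.insert hl'⟩

theorem IsQuasiCentral.gen_dvd_of_adj (hy : IsQuasiCentral y) (hij : G.Adj i j)
    (hi : gen i ∣ y) : gen j ∣ y := by
  obtain ⟨k, hk⟩ := hy j
  obtain ⟨a, ha⟩ : gen i ∣ gen j * y := hk ▸ hi.mul_right (gen k)
  obtain ⟨w, hyw, -⟩ := (confluent_of_gen_mul_eq ha).of_adj hij.symm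
  obtain ⟨l, hl⟩ := hy i
  rw [hyw, mul_assoc, mul_assoc] at hl
  exact ⟨_, hyw ▸ mul_left_cancel hl⟩

theorem IsQuasiCentral.gen_dvd (hG : G.Preconnected) (hy : IsQuasiCentral y) (hi : gen i ∣ y)
    (j : S) : gen j ∣ y := by
  obtain ⟨p⟩ := hG i j
  induction p with
  | nil => exact hi
  | cons h _ ih => exact ih (hy.gen_dvd_of_adj h hi)

section GarsideElement

variable {D z : ArtinMonoid G}

theorem isQuasiCentral_of_isLcm_range_gen (hD : IsLcm (Set.range gen) D) : IsQuasiCentral D := by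
  intro i
  have hgen (j : S) : gen j ∣ D := hD.dvd (Set.mem_range_self j)
  have hdvd : D ∣ gen i * D := (isLcm_range.1 hD _).2 fun j => by
    rcases eq_or_ne i j with rfl | hij
    · exact dvd_mul_right _ _
    rcases adj_or_compl_adj_of_ne (G := G) hij with hij | hij
    · obtain ⟨w, rfl⟩ := (isLcm_pair.1 (isLcm_gen_gen_of_adj hij) D).2 ⟨hgen i, hgen j⟩
      simp only [mul_assoc, gen_mul_braid hij, dvd_mul_right]
    · obtain ⟨w, hw⟩ := hgen j
      rw [hw, gen_mul_comm hij]
      exact dvd_mul_right _ _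
  obtain ⟨c, hc⟩ := hdvd
  have hlen := congrArg length hc
  simp only [length_mul, length_gen] at hlen
  obtain ⟨j, rfl⟩ := exists_eq_gen_of_length_eq_one (x := c) (by lia)
  exact ⟨j, hc⟩

theorem IsQuasiCentral.of_mul [Finite S] (hz : z ∈ Submonoid.center (ArtinMonoid G)) (hxz : x ∣ z)
    (hx : IsQuasiCentral x) (hxy : IsQuasiCentral (x * y)) : IsQuasiCentral y := by
  choose τ hτ using hx
  have τ_injective : Function.Injective τ := fun i j hij =>
    gen_injective <| mul_right_cancel_of_dvd_of_mem_center hxz hz <| by rw [hτ, hτ, hij]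
  intro k
  obtain ⟨i, rfl⟩ := Finite.surjective_of_injective τ_injective k
  obtain ⟨j, hj⟩ := hxy i
  rw [← mul_assoc, hτ, mul_assoc, mul_assoc] at hj
  exact ⟨j, mul_left_cancel hj⟩

theorem IsQuasiCentral.mem_powers [Finite S] (hG : G.Preconnected)
    (hz : z ∈ Submonoid.center (ArtinMonoid G)) (hD : IsLcm (Set.range gen) D) (hDz : D ∣ z)
    (hy : IsQuasiCentral y) : y ∈ Submonoid.powers D := by
  induction hs : length y using Nat.strong_induction_on generalizing y with
  | _ s ih =>
  obtain rfl | ⟨i, u, hu⟩ := eq_one_or_eq_gen_mul y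
  · exact one_mem _
  obtain ⟨w, rfl⟩ := (isLcm_range.1 hD y).2 (hy.gen_dvd hG ⟨u, hu⟩)
  have hD_pos : 0 < length D := by
    obtain ⟨v, rfl⟩ := hD.dvd (Set.mem_range_self i)
    simp
  have hw : IsQuasiCentral w := .of_mul hz hDz (isQuasiCentral_of_isLcm_range_gen hD) hy
  exact mul_mem (Submonoid.mem_powers D)
    (ih (length w) (by rw [← hs, length_mul]; lia) hw rfl)

theorem exists_center_le_powers [Finite S] (hG : G.Preconnected)
    (hz : z ∈ Submonoid.center (ArtinMonoid G)) (hgen : ∀ i, gen i ∣ z) :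
    ∃ d, Submonoid.center (ArtinMonoid G) ≤ Submonoid.powers d := by
  obtain ⟨D, hD⟩ := exists_isLcm_of_finite (Set.finite_range (gen : S → ArtinMonoid G))
    (Set.forall_mem_range.2 hgen)
  exact ⟨D, fun y hy => (isQuasiCentral_of_mem_center hy).mem_powers hG hz hD
    ((isLcm_range.1 hD z).2 hgen)⟩

end GarsideElement

end ArtinMonoid

end ArtinMonoid

section BraidSequence

/-- `s 0, …, s (m - 1)` satisfy the defining relations of the braid group on `m + 1` strands. -/
structure IsBraidSequence {N : Type*} [Monoid N] (s : ℕ → N) (m : ℕ) : Prop where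
  commute : ∀ {i j}, i + 1 < j → j < m → Commute (s i) (s j)
  braid : ∀ {i}, i + 1 < m → s i * s (i + 1) * s i = s (i + 1) * s i * s (i + 1)

variable {N : Type*} [Monoid N] {s : ℕ → N} {i k m : ℕ}

/-- The product `s 0 * ⋯ * s (k - 1)`. -/
def partialProd (s : ℕ → N) (k : ℕ) : N := ((List.range k).map s).prod

theorem partialProd_succ (s : ℕ → N) (k : ℕ) : partialProd s (k + 1) = partialProd s k * s k :=
  List.prod_range_succ s k

theorem partialProd_succ' (s : ℕ → N) (k : ℕ) :
    partialProd s (k + 1) = s 0 * partialProd (fun i => s (i + 1)) k :=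
  List.prod_range_succ' s k

theorem map_partialProd {N' : Type*} [Monoid N'] (f : N →* N') (s : ℕ → N) (k : ℕ) :
    f (partialProd s k) = partialProd (fun i => f (s i)) k := by
  simp [partialProd, map_list_prod, Function.comp_def]

theorem partialProd_congr {t : ℕ → N} (h : ∀ i < k, s i = t i) :
    partialProd s k = partialProd t k :=
  congrArg List.prod (List.map_congr_left fun i hi => h i (List.mem_range.1 hi))

namespace IsBraidSequence

theorem partialProd_commute (hs : IsBraidSequence s m) (hki : k < i) (hi : i < m) :
    Commute (partialProd s k) (s i) := by
  induction k with
  | zero => exact .one_left _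
  | succ k ih =>
    rw [partialProd_succ]
    exact (ih (by lia)).mul_left (hs.commute hki hi)

theorem semiconjBy_partialProd (hs : IsBraidSequence s m) (hik : i + 1 < k) (hk : k ≤ m) :
    SemiconjBy (partialProd s k) (s i) (s (i + 1)) := by
  induction k with
  | zero => lia
  | succ k ih =>
    rw [partialProd_succ]
    rcases (show i + 1 ≤ k by lia).lt_or_eq with h | rfl
    · exact (ih h (by lia)).mul_left (hs.commute h (by lia)).symm
    · rw [partialProd_succ, mul_assoc]
      have hbraid : SemiconjBy (s i * s (i + 1)) (s i) (s (i + 1)) := by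
        rw [SemiconjBy, hs.braid (by lia), mul_assoc]
      exact SemiconjBy.mul_left (hs.partialProd_commute (by lia) (by lia)) hbraid

theorem semiconjBy_partialProd_partialProd (hs : IsBraidSequence s m) (hk : k < m) :
    SemiconjBy (partialProd s m) (partialProd s k) (partialProd (fun i => s (i + 1)) k) := by
  induction k with
  | zero => exact .one_right _
  | succ k ih =>
    rw [partialProd_succ, partialProd_succ]
    exact (ih (by lia)).mul_right (hs.semiconjBy_partialProd hk le_rfl)

theorem semiconjBy_partialProd_pow (hs : IsBraidSequence s m) (d : ℕ) (h : i + d < m) :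
    SemiconjBy (partialProd s m ^ d) (s i) (s (i + d)) := by
  induction d with
  | zero => simp
  | succ d ih =>
    rw [pow_succ']
    exact (hs.semiconjBy_partialProd h le_rfl).mul_left (ih (by lia))

theorem semiconjBy_partialProd_sq (hs : IsBraidSequence s (k + 1)) :
    SemiconjBy (partialProd s (k + 1) ^ 2) (s k) (s 0) := by
  have hshift := (hs.semiconjBy_partialProd_partialProd (Nat.lt_succ_self k)).eq
  refine Eq.symm ?_
  calc s 0 * partialProd s (k + 1) ^ 2
      = s 0 * (partialProd s (k + 1) * partialProd s k) * s k := by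
        rw [sq]
        nth_rewrite 2 [partialProd_succ]
        simp only [mul_assoc]
    _ = s 0 * partialProd (fun i => s (i + 1)) k * partialProd s (k + 1) * s k := by
        rw [hshift, ← mul_assoc (s 0)]
    _ = partialProd s (k + 1) ^ 2 * s k := by rw [← partialProd_succ', sq]

theorem commute_partialProd_pow (hs : IsBraidSequence s m) (hi : i < m) :
    Commute (s i) (partialProd s m ^ (m + 1)) := by
  obtain ⟨d, rfl⟩ := Nat.exists_eq_add_of_lt hi
  have hlast := hs.semiconjBy_partialProd_pow d (i := i) (by lia)
  have hfirst := hs.semiconjBy_partialProd_pow i (i := 0) (by lia)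
  rw [zero_add] at hfirst
  rw [show i + d + 1 + 1 = i + (2 + d) by lia, pow_add, pow_add]
  exact (hfirst.mul_left (hs.semiconjBy_partialProd_sq.mul_left hlast)).symm

theorem dvd_partialProd_pow (hs : IsBraidSequence s m) (hi : i < m) :
    s i ∣ partialProd s m ^ (m + 1) := by
  obtain ⟨k, rfl⟩ := Nat.exists_eq_succ_of_ne_zero (Nat.ne_zero_of_lt hi)
  have hfirst := (hs.semiconjBy_partialProd_pow i (i := 0) (by lia)).eq
  rw [zero_add] at hfirst
  have hdvd : s i ∣ partialProd s (k + 1) ^ (i + 1) := by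
    rw [pow_succ]
    nth_rewrite 2 [partialProd_succ']
    rw [← mul_assoc, hfirst, mul_assoc]
    exact dvd_mul_right _ _
  exact hdvd.trans (pow_dvd_pow _ (by lia))

end IsBraidSequence

end BraidSequence

namespace BraidGroup

variable {n : ℕ}

theorem isBraidSequence_braidGen (n : ℕ) : IsBraidSequence (braidGen n) (n - 1) where
  commute {i j} hij hj := by
    have hi : i < n - 1 := by lia
    rw [braidGen, braidGen, dif_pos hi, dif_pos hj]
    have h : PresentedGroup.mk (braidRels (n - 1)) _ = 1 :=
      PresentedGroup.one_of_mem ⟨⟨i, hi⟩, ⟨j, hj⟩, .inr ⟨hij, rfl⟩⟩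
    rwa [map_mul, map_inv, mul_inv_eq_one] at h
  braid {i} hi := by
    have hi' : i < n - 1 := by lia
    rw [braidGen, braidGen, dif_pos hi', dif_pos hi]
    have h : PresentedGroup.mk (braidRels (n - 1)) _ = 1 :=
      PresentedGroup.one_of_mem ⟨⟨i, hi'⟩, ⟨i + 1, hi⟩, .inl ⟨rfl, rfl⟩⟩
    rwa [map_mul, map_inv, mul_inv_eq_one] at h

theorem braidGen_val (i : Fin (n - 1)) : braidGen n i = PresentedGroup.of i := by
  rw [braidGen, dif_pos i.2]

section Lift

variable {K : Type*} [Group K] {s : ℕ → K}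

theorem freeGroupLift_eq_one_of_mem_braidRels (hs : IsBraidSequence s (n - 1))
    {r : FreeGroup (Fin (n - 1))} (hr : r ∈ braidRels (n - 1)) :
    FreeGroup.lift (fun i : Fin (n - 1) => s i) r = 1 := by
  obtain ⟨i, j, ⟨hij, rfl⟩ | ⟨hij, rfl⟩⟩ := hr <;> rw [map_mul, map_inv, mul_inv_eq_one]
  · simpa [← hij] using hs.braid (hij ▸ j.2)
  · simpa using (hs.commute hij j.2).eq

/-- The homomorphism `σ_i ↦ s i` from the braid group. -/
def lift (hs : IsBraidSequence s (n - 1)) : BraidGroup n →* K :=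
  PresentedGroup.toGroup fun _ => freeGroupLift_eq_one_of_mem_braidRels hs

theorem lift_braidGen (hs : IsBraidSequence s (n - 1)) {i : ℕ} (hi : i < n - 1) :
    lift hs (braidGen n i) = s i := by
  rw [braidGen, dif_pos hi]
  exact PresentedGroup.toGroup.of fun _ => freeGroupLift_eq_one_of_mem_braidRels hs

end Lift

end BraidGroup

/-- The monoid of positive braids on `n` strands. -/
abbrev PositiveBraid (n : ℕ) := ArtinMonoid (SimpleGraph.pathGraph (n - 1))

namespace PositiveBraid

open ArtinMonoid SimpleGraph

variable {n : ℕ}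

theorem cliqueFree_three_pathGraph (m : ℕ) : (pathGraph m).CliqueFree 3 := by
  intro s hs
  obtain ⟨a, b, c, hab, hac, hbc, -⟩ := is3Clique_iff.1 hs
  rw [pathGraph_adj] at hab hac hbc
  lia

instance (m : ℕ) : Fact ((pathGraph m).CliqueFree 3) := ⟨cliqueFree_three_pathGraph m⟩

/-- The generator `σ_i`, indexed like `braidGen`; equals `1` out of range. -/
def gen (n i : ℕ) : PositiveBraid n := if h : i < n - 1 then ArtinMonoid.gen ⟨i, h⟩ else 1

theorem gen_val (i : Fin (n - 1)) : gen n i = ArtinMonoid.gen i := by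
  rw [gen, dif_pos i.2]

theorem isBraidSequence_gen (n : ℕ) : IsBraidSequence (gen n) (n - 1) where
  commute {i j} hij hj := by
    have hadj : (pathGraph (n - 1))ᶜ.Adj ⟨i, by lia⟩ ⟨j, hj⟩ := by
      simp only [compl_adj, ne_eq, Fin.mk.injEq, pathGraph_adj]
      lia
    rw [gen, gen, dif_pos, dif_pos, commute_iff_eq]
    simpa using gen_mul_comm hadj 1
  braid {i} hi := by
    have hadj : (pathGraph (n - 1)).Adj ⟨i, by lia⟩ ⟨i + 1, hi⟩ := pathGraph_adj.2 (.inl rfl)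
    rw [gen, gen, dif_pos, dif_pos]
    simpa [mul_assoc] using gen_mul_braid hadj 1

/-- The positive full twist `(σ_1 ⋯ σ_{n-1})^n`. -/
def fullTwist (n : ℕ) : PositiveBraid n := partialProd (gen n) (n - 1) ^ n

theorem fullTwist_mem_center (n : ℕ) :
    fullTwist n ∈ Submonoid.center (PositiveBraid n) := by
  refine mem_center_of_forall_gen fun i => ?_
  obtain ⟨m, rfl⟩ := Nat.exists_eq_succ_of_ne_zero (show n ≠ 0 by have := i.2; lia)
  rw [← gen_val]
  exact (isBraidSequence_gen (m + 1)).commute_partialProd_pow i.2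

theorem gen_dvd_fullTwist (i : Fin (n - 1)) : ArtinMonoid.gen i ∣ fullTwist n := by
  obtain ⟨m, rfl⟩ := Nat.exists_eq_succ_of_ne_zero (show n ≠ 0 by have := i.2; lia)
  rw [← gen_val]
  exact (isBraidSequence_gen (m + 1)).dvd_partialProd_pow i.2

section Lift

variable {N : Type*} [Monoid N] {s : ℕ → N}

theorem freeMonoidLift_eq_of_artinRel (hs : IsBraidSequence s (n - 1))
    {v w : FreeMonoid (Fin (n - 1))} (h : ArtinRel (pathGraph (n - 1)) v w) :
    FreeMonoid.lift (fun i : Fin (n - 1) => s i) v =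
      FreeMonoid.lift (fun i : Fin (n - 1) => s i) w := by
  cases h with
  | @braid i j hadj =>
    obtain h | h := pathGraph_adj.1 hadj
    · simpa [← h] using hs.braid (h ▸ j.2)
    · simpa [← h] using (hs.braid (h ▸ i.2)).symm
  | @comm i j hadj =>
    rw [compl_adj, pathGraph_adj, ne_eq, Fin.ext_iff] at hadj
    obtain h | h : (i : ℕ) + 1 < j ∨ (j : ℕ) + 1 < i := by lia
    · simpa using (hs.commute h j.2).eq
    · simpa using (hs.commute h i.2).eq.symm

/-- The homomorphism `σ_i ↦ s i` from the monoid of positive braids. -/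
def lift (hs : IsBraidSequence s (n - 1)) : PositiveBraid n →* N :=
  PresentedMonoid.lift (fun i : Fin (n - 1) => s i)
    fun _ _ => freeMonoidLift_eq_of_artinRel hs

theorem lift_gen (hs : IsBraidSequence s (n - 1)) (i : Fin (n - 1)) :
    lift hs (ArtinMonoid.gen i) = s i := rfl

end Lift

/-- The canonical map from positive braids to braids. -/
def toBraidGroup (n : ℕ) : PositiveBraid n →* BraidGroup n :=
  lift (BraidGroup.isBraidSequence_braidGen n)

theorem toBraidGroup_gen (i : Fin (n - 1)) :
    toBraidGroup n (ArtinMonoid.gen i) = braidGen n i :=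
  lift_gen _ i

theorem toBraidGroup_fullTwist (n : ℕ) : toBraidGroup n (fullTwist n) = _root_.fullTwist n := by
  rw [fullTwist, map_pow, map_partialProd]
  refine congrArg (· ^ n) (partialProd_congr fun i hi => ?_)
  rw [gen, dif_pos hi, toBraidGroup_gen]

/-- Embed positive braids in a monoid in which the generators, being divisors of the central full
twist, are invertible; the embedding then extends to all braids. -/
theorem toBraidGroup_injective (n : ℕ) : Function.Injective (toBraidGroup n) := by
  obtain ⟨L, _, f, hf, hunit⟩ := exists_injective_forall_dvd_isUnit (fullTwist_mem_center n)
  choose! u hu using fun (i : ℕ) (hi : i < n - 1) => hunit (gen n i)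
    (by rw [gen, dif_pos hi]; exact gen_dvd_fullTwist _)
  have hs : IsBraidSequence u (n - 1) :=
    { commute {i j} hij hj := Units.ext <| by
        simpa [hu j hj, hu i (by lia)] using
          (((isBraidSequence_gen n).commute hij hj).map f).eq
      braid hi := Units.ext <| by
        simpa [hu _ hi, hu _ (Nat.lt_of_succ_lt hi)] using
          congrArg f ((isBraidSequence_gen n).braid hi) }
  have hcomp : ((Units.coeHom L).comp (BraidGroup.lift hs)).comp (toBraidGroup n) = f := by
    refine PresentedMonoid.ext _ fun i => ?_
    change (BraidGroup.lift hs (toBraidGroup n (ArtinMonoid.gen i)) : L) = f (ArtinMonoid.gen i)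
    rw [toBraidGroup_gen, BraidGroup.lift_braidGen hs i.2, hu i i.2, gen_val]
  refine Function.Injective.of_comp (f := (Units.coeHom L).comp (BraidGroup.lift hs)) ?_
  rwa [← MonoidHom.coe_comp, hcomp]

theorem closure_toBraidGroup_image (n : ℕ) :
    Subgroup.closure (toBraidGroup n '' Set.range ArtinMonoid.gen) = ⊤ := by
  rw [← Set.range_comp, ← PresentedGroup.closure_range_of (braidRels (n - 1))]
  congr 2
  exact funext fun i => (toBraidGroup_gen i).trans (BraidGroup.braidGen_val i)

end PositiveBraid

namespace BraidGroup

theorem fullTwist_mem_center (n : ℕ) : fullTwist n ∈ Subgroup.center (BraidGroup n) := by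
  rw [← PositiveBraid.toBraidGroup_fullTwist]
  exact map_mem_center_of_closure_eq_top (PositiveBraid.closure_toBraidGroup_image n)
    (PositiveBraid.fullTwist_mem_center n)

instance isCyclic_center (n : ℕ) : IsCyclic (Subgroup.center (BraidGroup n)) := by
  obtain ⟨d, hd⟩ := ArtinMonoid.exists_center_le_powers (SimpleGraph.pathGraph_preconnected _)
    (PositiveBraid.fullTwist_mem_center n) PositiveBraid.gen_dvd_fullTwist
  exact Subgroup.isCyclic_of_le <| center_le_zpowers_map (PositiveBraid.toBraidGroup_injective n)
    (PositiveBraid.closure_toBraidGroup_image n) (PositiveBraid.fullTwist_mem_center n)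
    (Set.forall_mem_range.2 PositiveBraid.gen_dvd_fullTwist) hd

end BraidGroup

section Linking

theorem apply_eq_of_commute_swap {α : Type*} [DecidableEq α] {π : Equiv.Perm α} {a b c : α}
    (hab : a ≠ b) (hbc : b ≠ c) (hac : a ≠ c) (h₁ : Commute π (Equiv.swap a b))
    (h₂ : Commute π (Equiv.swap b c)) : π a = a ∧ π b = b := by
  have hb : π b = Equiv.swap a b (π a) := by simpa using congrArg (· a) h₁.eq
  have ha : π a = Equiv.swap b c (π a) := by
    simpa [Equiv.swap_apply_of_ne_of_ne hab hac] using congrArg (· a) h₂.eq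
  have ha_ne_b : π a ≠ b := fun h => hbc <| by simpa [h] using ha
  have ha_eq : π a = a := by
    by_contra h
    rw [Equiv.swap_apply_of_ne_of_ne h ha_ne_b] at hb
    exact hab (π.injective hb.symm)
  exact ⟨ha_eq, by rw [hb, ha_eq, Equiv.swap_apply_left]⟩

theorem mulAutArrow_mulSingle {K A H : Type*} [Group K] [MulAction K A] [Monoid H] [DecidableEq A]
    (g : K) (a : A) (t : H) :
    mulAutArrow g (Pi.mulSingle a t : A → H) = Pi.mulSingle (g • a) t := by
  funext b
  change (Pi.mulSingle a t : A → H) (g⁻¹ • b) = _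
  simp only [Pi.mulSingle_apply, inv_smul_eq_iff]

/-- The value at `a` of the `A → H` part is multiplicative on those elements of `(A → H) ⋊ K` whose
`K` part fixes `a`. -/
def evalOfFixed {K A : Type*} (H : Type*) [Group K] [MulAction K A] [Group H] (a : A) :
    (MulAction.stabilizer K a).comap
      (SemidirectProduct.rightHom : (A → H) ⋊[mulAutArrow] K →* K) →* H where
  toFun x := x.1.left a
  map_one' := rfl
  map_mul' x y := by
    have hx : x.1.right⁻¹ • a = a := inv_smul_eq_iff.2 (MulAction.mem_stabilizer_iff.1 x.2).symm
    change x.1.left a * y.1.left (x.1.right⁻¹ • a) = _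
    rw [hx]

/-- Permutations of the strands together with an integer for each ordered pair of strands. -/
abbrev CrossingGroup := (ℕ × ℕ → Multiplicative ℤ) ⋊[mulAutArrow] Equiv.Perm ℕ

/-- The image of `σ_i`: it exchanges the strands at positions `i` and `i + 1`. Strands `a` and `b`
cross with `a` to the left of `b`, or the other way round; recording only the former at `(a, b)`
makes a full twist of two strands count once. -/
def crossing (i : ℕ) : CrossingGroup :=
  ⟨Pi.mulSingle (i, i + 1) (.ofAdd 1), Equiv.swap i (i + 1)⟩

theorem left_crossing (i : ℕ) : (crossing i).left = Pi.mulSingle (i, i + 1) (.ofAdd 1) := rfl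

theorem right_crossing (i : ℕ) : (crossing i).right = Equiv.swap i (i + 1) := rfl

theorem left_mul_crossing (x : CrossingGroup) (i : ℕ) :
    (x * crossing i).left
      = x.left * Pi.mulSingle (x.right i, x.right (i + 1)) (.ofAdd 1) := by
  rw [SemidirectProduct.mul_left, left_crossing, mulAutArrow_mulSingle]
  rfl

theorem right_mul_crossing (x : CrossingGroup) (i : ℕ) :
    (x * crossing i).right = x.right * Equiv.swap i (i + 1) := rfl

theorem isBraidSequence_crossing (m : ℕ) : IsBraidSequence crossing m where
  commute {i j} hij _ := by
    refine SemidirectProduct.ext ?_ ?_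
    · simp only [left_mul_crossing, left_crossing, right_crossing]
      rw [mul_comm, Equiv.swap_apply_of_ne_of_ne (by lia) (by lia),
        Equiv.swap_apply_of_ne_of_ne (by lia) (by lia),
        Equiv.swap_apply_of_ne_of_ne (by lia) (by lia),
        Equiv.swap_apply_of_ne_of_ne (by lia) (by lia)]
    · ext a
      simp only [right_mul_crossing, right_crossing, Equiv.Perm.mul_apply]
      grind
  braid {i} _ := by
    refine SemidirectProduct.ext ?_ ?_
    · have left_eq : Equiv.swap i (i + 1) (i + 2) = i + 2 :=
        Equiv.swap_apply_of_ne_of_ne (by lia) (by lia)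
      have right_eq : Equiv.swap (i + 1) (i + 2) i = i :=
        Equiv.swap_apply_of_ne_of_ne (by lia) (by lia)
      simp only [left_mul_crossing, right_mul_crossing, left_crossing, right_crossing,
        Equiv.Perm.mul_apply, add_assoc, Nat.reduceAdd, Equiv.swap_apply_left,
        Equiv.swap_apply_right, left_eq, right_eq]
      simp only [mul_comm, mul_left_comm]
    · ext a
      simp only [right_mul_crossing, right_crossing, Equiv.Perm.mul_apply]
      grind

theorem right_partialProd_crossing_of_lt {a k : ℕ} (h : k < a) :
    (partialProd crossing k).right a = a := by
  induction k with
  | zero => rfl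
  | succ k ih =>
    rw [partialProd_succ, right_mul_crossing, Equiv.Perm.mul_apply,
      Equiv.swap_apply_of_ne_of_ne (by lia) (by lia), ih (by lia)]

theorem right_partialProd_crossing_of_gt {a k : ℕ} (h : a < k) :
    (partialProd crossing k).right a = a + 1 := by
  induction k with
  | zero => lia
  | succ k ih =>
    rw [partialProd_succ, right_mul_crossing, Equiv.Perm.mul_apply]
    rcases (Nat.lt_succ_iff.1 h).lt_or_eq with h | rfl
    · rw [Equiv.swap_apply_of_ne_of_ne (by lia) (by lia), ih h]
    · rw [Equiv.swap_apply_left, right_partialProd_crossing_of_lt (by lia)]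

theorem right_partialProd_crossing_self (k : ℕ) : (partialProd crossing k).right k = 0 := by
  induction k with
  | zero => rfl
  | succ k ih =>
    rw [partialProd_succ, right_mul_crossing, Equiv.Perm.mul_apply, Equiv.swap_apply_right, ih]

theorem left_partialProd_crossing (k : ℕ) :
    (partialProd crossing k).left
      = ∏ b ∈ Finset.range k, Pi.mulSingle (0, b + 1) (Multiplicative.ofAdd (1 : ℤ)) := by
  induction k with
  | zero => rfl
  | succ k ih =>
    rw [partialProd_succ, left_mul_crossing, ih, Finset.prod_range_succ,
      right_partialProd_crossing_self, right_partialProd_crossing_of_lt (Nat.lt_succ_self k)]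

theorem left_partialProd_crossing_of_ne_zero {a : ℕ} (ha : a ≠ 0) (b k : ℕ) :
    (partialProd crossing k).left (a, b) = 1 := by
  rw [left_partialProd_crossing, Finset.prod_apply]
  exact Finset.prod_eq_one fun c _ => Pi.mulSingle_eq_of_ne (by simp [ha]) _

theorem left_partialProd_crossing_zero_one {k : ℕ} (hk : 0 < k) :
    (partialProd crossing k).left (0, 1) = .ofAdd 1 := by
  rw [left_partialProd_crossing, Finset.prod_apply, Finset.prod_eq_single_of_mem 0 (by simpa)]
  · rw [zero_add, Pi.mulSingle_eq_same]
  · exact fun b _ hb => Pi.mulSingle_eq_of_ne (by simpa using hb) _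

theorem right_partialProd_crossing_pow_zero {j m : ℕ} (hj : j ≤ m) :
    (partialProd crossing m ^ j).right 0 = j := by
  induction j with
  | zero => rfl
  | succ j ih =>
    rw [pow_succ', SemidirectProduct.mul_right, Equiv.Perm.mul_apply, ih (by lia),
      right_partialProd_crossing_of_gt hj]

theorem left_partialProd_crossing_pow {j m : ℕ} (hm : 0 < m) (hj : j ≤ m) :
    (partialProd crossing m ^ (j + 1)).left (0, 1) = .ofAdd 1 := by
  induction j with
  | zero => rw [zero_add, pow_one, left_partialProd_crossing_zero_one hm]
  | succ j ih =>
    set π := (partialProd crossing m ^ (j + 1)).right with hπ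
    have hne : π⁻¹ 0 ≠ 0 := by
      rw [Ne, Equiv.Perm.inv_eq_iff_eq, hπ, right_partialProd_crossing_pow_zero hj]
      exact (Nat.succ_ne_zero j).symm
    rw [pow_succ, SemidirectProduct.mul_left, Pi.mul_apply, ih (by lia)]
    change _ * (partialProd crossing m).left (π⁻¹ 0, π⁻¹ 1) = _
    rw [left_partialProd_crossing_of_ne_zero hne, mul_one]

end Linking

namespace BraidGroup

variable {n : ℕ}

/-- Records the permutation of the strands and the crossings between them. -/
def toCrossingGroup (n : ℕ) : BraidGroup n →* CrossingGroup :=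
  lift (isBraidSequence_crossing (n - 1))

theorem toCrossingGroup_braidRho (n : ℕ) :
    toCrossingGroup n (braidRho n) = partialProd crossing (n - 1) :=
  (map_partialProd _ (braidGen n) _).trans (partialProd_congr fun _ hi => lift_braidGen _ hi)

theorem left_toCrossingGroup_fullTwist (hn : 2 ≤ n) :
    (toCrossingGroup n (fullTwist n)).left (0, 1) = .ofAdd 1 := by
  obtain ⟨m, rfl⟩ := Nat.exists_eq_succ_of_ne_zero (show n ≠ 0 by lia)
  rw [fullTwist, map_pow, toCrossingGroup_braidRho]
  exact left_partialProd_crossing_pow (by lia) le_rfl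

/-- The braids in which the first two strands return to their positions. -/
def pureFirstTwo (n : ℕ) : Subgroup (BraidGroup n) :=
  ((MulAction.stabilizer (Equiv.Perm ℕ) ((0, 1) : ℕ × ℕ)).comap SemidirectProduct.rightHom).comap
    (toCrossingGroup n)

/-- The linking number of the first two strands. -/
def linkingNumber (n : ℕ) : pureFirstTwo n →* Multiplicative ℤ :=
  (evalOfFixed (Multiplicative ℤ) ((0, 1) : ℕ × ℕ)).comp ((toCrossingGroup n).subgroupComap _)

theorem linkingNumber_apply (x : pureFirstTwo n) :
    linkingNumber n x = (toCrossingGroup n x).left (0, 1) := rfl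

theorem center_le_pureFirstTwo (hn : 3 ≤ n) : Subgroup.center (BraidGroup n) ≤ pureFirstTwo n := by
  intro x hx
  have hcomm (i : ℕ) (hi : i < n - 1) :
      Commute (toCrossingGroup n x).right (Equiv.swap i (i + 1)) := by
    have h : Commute x (braidGen n i) := (Subgroup.mem_center_iff.1 hx _).symm
    have h' := (h.map (toCrossingGroup n)).map SemidirectProduct.rightHom
    rwa [toCrossingGroup, lift_braidGen _ hi] at h'
  obtain ⟨h₀, h₁⟩ := apply_eq_of_commute_swap (by lia) (by lia) (by lia)
    (hcomm 0 (by lia)) (hcomm 1 (by lia))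
  exact Prod.ext h₀ h₁

end BraidGroup

/-- For `n ≥ 3`, the center of the braid group `B_n` is infinite cyclic,
generated by the full twist `z_n = (σ_1 ⋯ σ_{n-1})^n`. -/
theorem center_braidGroup (n : ℕ) (hn : 3 ≤ n) :
    Subgroup.center (BraidGroup n) = Subgroup.zpowers (fullTwist n) ∧
    (∀ k : ℤ, fullTwist n ^ k = 1 → k = 0) := by
  let χ := (BraidGroup.linkingNumber n).comp
    (Subgroup.inclusion (BraidGroup.center_le_pureFirstTwo hn))
  let z : Subgroup.center (BraidGroup n) := ⟨fullTwist n, BraidGroup.fullTwist_mem_center n⟩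
  have hz : χ z = .ofAdd 1 :=
    (BraidGroup.linkingNumber_apply _).trans (BraidGroup.left_toCrossingGroup_fullTwist (by lia))
  exact ⟨eq_zpowers_of_map_eq_ofAdd_one χ hz, fun k hk =>
    eq_zero_of_zpow_eq_one_of_map_eq_ofAdd_one χ hz (Subtype.ext hk)⟩
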